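/- The operator Ω_Φ on the 70-dimensional space of 4-forms on ℝ^8 is diagonalizable with eigenvalues −24, −12, 4, 0 whose eigenspaces Λ⁴₁, Λ⁴₇, Λ⁴₂₇, Λ⁴₃₅ have dimensions 1, 7, 27, 35 respectively; the space of self-dual 4-forms (those with σ_{ijkl} = (1/24) ε_{ijklabcd} σ_{abcd}) equals Λ⁴₁ ⊕ Λ⁴₇ ⊕ Λ⁴₂₇, and the space of anti-self-dual 4-forms equals Λ⁴₃₅. In particular Ω_Φ satisfies (Ω_Φ + 24)(Ω_Φ + 12)(Ω_Φ − 4)Ω_Φ = 0. -/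

import Mathlib

/-!
We work in ℝ⁸ with the standard basis `e₀, …, e₇`.  A `k`-form is a totally antisymmetric
map `(Fin 8)^k → ℝ`; repeated indices are summed over `Fin 8` and `kd` is the Kronecker
delta.  `Phi` is the fundamental 4-form of the standard `Spin(7)`-structure on ℝ⁸,
`Φ = -e₀₁₂₇ + e₀₂₃₆ - e₀₃₄₇ - e₀₅₆₇ + e₀₁₄₆ + e₀₂₄₅ - e₀₁₃₅
     - e₃₄₅₆ - e₁₄₅₇ - e₁₂₅₆ - e₁₂₃₄ - e₂₃₅₇ - e₁₃₆₇ + e₂₄₆₇`.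
-/

noncomputable section

/-- Kronecker delta on `Fin 8`. -/
def kd (a b : Fin 8) : ℝ := if a = b then 1 else 0

/-- Component at the indices `(i,j,k,l)` of the wedge product `e_a ∧ e_b ∧ e_c ∧ e_d`
of standard coordinate 1-forms, normalized so that `(e_a ∧ e_b ∧ e_c ∧ e_d)_{abcd} = 1`;
it is the alternating sum of products of Kronecker deltas. -/
def wedge4 (a b c d i j k l : Fin 8) : ℝ :=
  Matrix.det !![kd a i, kd a j, kd a k, kd a l;
                kd b i, kd b j, kd b k, kd b l;
                kd c i, kd c j, kd c k, kd c l;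
                kd d i, kd d j, kd d k, kd d l]

/-- The fundamental 4-form `Φ` of the standard `Spin(7)`-structure on `ℝ⁸`, in components:
the totally antisymmetric 4-tensor with `Φ_{0127} = -1`, `Φ_{0236} = 1`, `Φ_{0347} = -1`,
`Φ_{0567} = -1`, `Φ_{0146} = 1`, `Φ_{0245} = 1`, `Φ_{0135} = -1`, `Φ_{3456} = -1`,
`Φ_{1457} = -1`, `Φ_{1256} = -1`, `Φ_{1234} = -1`, `Φ_{2357} = -1`, `Φ_{1367} = -1`,
`Φ_{2467} = 1`, all components not obtained from these by permutation being zero. -/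
def Phi (i j k l : Fin 8) : ℝ :=
    -wedge4 0 1 2 7 i j k l + wedge4 0 2 3 6 i j k l - wedge4 0 3 4 7 i j k l
  - wedge4 0 5 6 7 i j k l + wedge4 0 1 4 6 i j k l + wedge4 0 2 4 5 i j k l
  - wedge4 0 1 3 5 i j k l - wedge4 3 4 5 6 i j k l - wedge4 1 4 5 7 i j k l
  - wedge4 1 2 5 6 i j k l - wedge4 1 2 3 4 i j k l - wedge4 2 3 5 7 i j k l
  - wedge4 1 3 6 7 i j k l + wedge4 2 4 6 7 i j k l

/-- The Levi-Civita symbol on eight indices: `eps8 f` is the sign of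
`(f 0, …, f 7)` as a permutation of `(0, …, 7)`, and `0` if an index repeats. -/
def eps8 (f : Fin 8 → Fin 8) : ℝ :=
  if h : Function.Bijective f then ((Equiv.Perm.sign (Equiv.ofBijective f h) : ℤ) : ℝ) else 0

/-- Totally antisymmetric 4-tensors on ℝ⁸ (4-forms). -/
def FourForm : Submodule ℝ (Fin 8 → Fin 8 → Fin 8 → Fin 8 → ℝ) where
  carrier :=
    {σ | ∀ i j k l, σ i j k l = -σ j i k l ∧ σ i j k l = -σ i k j l ∧ σ i j k l = -σ i j l k}
  zero_mem' := by intro i j k l; refine ⟨by simp, by simp, by simp⟩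
  add_mem' := by
    intro a b ha hb i j k l
    refine ⟨?_, ?_, ?_⟩
    · simp only [Pi.add_apply, (ha i j k l).1, (hb i j k l).1]; ring
    · simp only [Pi.add_apply, (ha i j k l).2.1, (hb i j k l).2.1]; ring
    · simp only [Pi.add_apply, (ha i j k l).2.2, (hb i j k l).2.2]; ring
  smul_mem' := by
    intro c a ha i j k l
    refine ⟨?_, ?_, ?_⟩
    · simp only [Pi.smul_apply, smul_eq_mul, (ha i j k l).1]; ring
    · simp only [Pi.smul_apply, smul_eq_mul, (ha i j k l).2.1]; ring
    · simp only [Pi.smul_apply, smul_eq_mul, (ha i j k l).2.2]; ring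

/-- The operator `Ω_Φ` on 4-tensors:
`(Ω_Φ(σ))_{ijkl} = σ_{ijpq}Φ_{pqkl} + σ_{ikpq}Φ_{pqlj} + σ_{ilpq}Φ_{pqjk}
                 + σ_{jkpq}Φ_{pqil} + σ_{jlpq}Φ_{pqki} + σ_{klpq}Φ_{pqij}`. -/
def OmegaOp : (Fin 8 → Fin 8 → Fin 8 → Fin 8 → ℝ) →ₗ[ℝ] (Fin 8 → Fin 8 → Fin 8 → Fin 8 → ℝ) where
  toFun σ := fun i j k l =>
    (∑ p, ∑ q, σ i j p q * Phi p q k l) + (∑ p, ∑ q, σ i k p q * Phi p q l j)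
    + (∑ p, ∑ q, σ i l p q * Phi p q j k) + (∑ p, ∑ q, σ j k p q * Phi p q i l)
    + (∑ p, ∑ q, σ j l p q * Phi p q k i) + (∑ p, ∑ q, σ k l p q * Phi p q i j)
  map_add' σ τ := by
    funext i j k l
    simp only [Pi.add_apply, add_mul, Finset.sum_add_distrib]
    ring
  map_smul' c σ := by
    funext i j k l
    simp only [Pi.smul_apply, smul_eq_mul, RingHom.id_apply, Finset.mul_sum, mul_assoc, mul_add]

/-- The Hodge star operator on 4-tensors on ℝ⁸:
`(*σ)_{ijkl} = (1/24) ε_{ijklabcd} σ_{abcd}` (sum over `a,b,c,d`). -/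
def hodgeOp : (Fin 8 → Fin 8 → Fin 8 → Fin 8 → ℝ) →ₗ[ℝ] (Fin 8 → Fin 8 → Fin 8 → Fin 8 → ℝ) where
  toFun σ := fun i j k l =>
    (1/24) * ∑ a, ∑ b, ∑ c, ∑ d, eps8 ![i, j, k, l, a, b, c, d] * σ a b c d
  map_add' σ τ := by
    funext i j k l
    simp only [Pi.add_apply, mul_add, add_mul, Finset.sum_add_distrib]
  map_smul' c σ := by
    funext i j k l
    simp only [Pi.smul_apply, smul_eq_mul, RingHom.id_apply, Finset.mul_sum,
      mul_comm, mul_left_comm, mul_assoc]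

/-- `Λ⁴₁`: eigenspace of `Ω_Φ` for the eigenvalue `-24` (within 4-forms). -/
def Lambda4_1 : Submodule ℝ (Fin 8 → Fin 8 → Fin 8 → Fin 8 → ℝ) :=
  FourForm ⊓ Module.End.eigenspace OmegaOp (-24)

/-- `Λ⁴₇`: eigenspace of `Ω_Φ` for the eigenvalue `-12` (within 4-forms). -/
def Lambda4_7 : Submodule ℝ (Fin 8 → Fin 8 → Fin 8 → Fin 8 → ℝ) :=
  FourForm ⊓ Module.End.eigenspace OmegaOp (-12)

/-- `Λ⁴₂₇`: eigenspace of `Ω_Φ` for the eigenvalue `4` (within 4-forms). -/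
def Lambda4_27 : Submodule ℝ (Fin 8 → Fin 8 → Fin 8 → Fin 8 → ℝ) :=
  FourForm ⊓ Module.End.eigenspace OmegaOp 4

/-- `Λ⁴₃₅`: eigenspace of `Ω_Φ` for the eigenvalue `0` (within 4-forms). -/
def Lambda4_35 : Submodule ℝ (Fin 8 → Fin 8 → Fin 8 → Fin 8 → ℝ) :=
  FourForm ⊓ Module.End.eigenspace OmegaOp 0

/-- Self-dual 4-forms: `σ = *σ`. -/
def SelfDual4 : Submodule ℝ (Fin 8 → Fin 8 → Fin 8 → Fin 8 → ℝ) :=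
  FourForm ⊓ Module.End.eigenspace hodgeOp 1

/-- Anti-self-dual 4-forms: `σ = -*σ`. -/
def AntiSelfDual4 : Submodule ℝ (Fin 8 → Fin 8 → Fin 8 → Fin 8 → ℝ) :=
  FourForm ⊓ Module.End.eigenspace hodgeOp (-1)

/-!
Let `ψ` be the spinor fixed by `Spin(7)` and label the basis vectors `e_i` by the points of `𝔽₂³`.
Then `e_i e_j ψ = ± u_{i+j}` for an orthonormal basis `u_c`, `c ∈ 𝔽₂³`, of the half-spin
representation of `ψ`, so the products of four basis vectors map `ψ` to `± u_c`, where `c`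
is the sum of the four labels. If every component `σ_{ijkl}` is multiplied by the corresponding
sign, a 4-form becomes a function on the 4-element subsets of `{0, …, 7}` on which no signs are
left: the Hodge star becomes the complementation `C`, and `Ω_Φ` becomes `2 (1 + C) - 2 B`, where `B`
sums a function over all subsets with the same label sum. There are 14 subsets with label sum `0`
and 8 with each of the 7 nonzero label sums. Hence the eigenvalue is `4 - 28` on the line of
functions supported on label sum `0` and constant there, `4 - 16` on the 7-dimensional space of
functions of a nonzero label sum, `4` on the remaining `C`-invariant functions and `0` where
`C = -1`.
-/

section Spectral

variable {K V W : Type*} [Field K] [AddCommGroup V] [Module K V] [AddCommGroup W] [Module K W]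

lemma iSup_range_eq_top {ι : Type*} [Fintype ι] {P : ι → Module.End K V}
    (hP : CompleteOrthogonalIdempotents P) : ⨆ i, LinearMap.range (P i) = ⊤ := by
  refine eq_top_iff.2 fun x _ ↦ ?_
  have hx : ∑ i, P i x = x := by simpa using congr($hP.complete x)
  rw [← hx]
  exact Submodule.sum_mem _ fun i _ ↦ Submodule.mem_iSup_of_mem i ⟨x, rfl⟩

lemma eigenspace_sum_smul {ι : Type*} [Fintype ι] {P : ι → Module.End K V}
    (hP : CompleteOrthogonalIdempotents P) (r : ι → K) (μ : K) :
    Module.End.eigenspace (∑ i, r i • P i) μ = ⨆ i, ⨆ _ : r i = μ, LinearMap.range (P i) := by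
  classical
  refine le_antisymm (fun x hx ↦ ?_) (iSup₂_le ?_)
  · have hPx (i : ι) : r i • P i x = μ • P i x := by
      have hi : P i * ∑ j, r j • P j = r i • P i := by simp [Finset.mul_sum, hP.mul_eq]
      rw [← map_smul (P i) μ x, ← Module.End.mem_eigenspace_iff.1 hx]
      exact congr($hi.symm x)
    have hsum : ∑ i, P i x = x := by simpa using congr($hP.complete x)
    rw [← hsum]
    refine Submodule.sum_mem _ fun i _ ↦ ?_
    by_cases hi : r i = μ
    · exact Submodule.mem_iSup_of_mem i (Submodule.mem_iSup_of_mem hi ⟨x, rfl⟩)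
    · have h0 : (r i - μ) • P i x = 0 := by rw [sub_smul, hPx, sub_self]
      rw [(smul_eq_zero.1 h0).resolve_left (sub_ne_zero.2 hi)]
      exact Submodule.zero_mem _
  · rintro i rfl _ ⟨x, rfl⟩
    have hi : (∑ j, r j • P j) * P i = r i • P i := by simp [Finset.sum_mul, hP.mul_eq]
    exact Module.End.mem_eigenspace_iff.2 congr($hi x)

lemma range_inf_eigenspace {f : V →ₗ[K] W} (hf : Function.Injective f) {A : Module.End K W}
    {B : Module.End K V} (hAB : A ∘ₗ f = f ∘ₗ B) (μ : K) :
    LinearMap.range f ⊓ A.eigenspace μ = (B.eigenspace μ).map f := by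
  have hiff (x : V) : f x ∈ A.eigenspace μ ↔ x ∈ B.eigenspace μ := by
    have hx : A (f x) = f (B x) := congr($hAB x)
    rw [Module.End.mem_eigenspace_iff, Module.End.mem_eigenspace_iff, hx, ← map_smul, hf.eq_iff]
  ext w
  constructor
  · rintro ⟨⟨x, rfl⟩, hx⟩
    exact ⟨x, (hiff x).1 hx, rfl⟩
  · rintro ⟨x, hx, rfl⟩
    exact ⟨⟨x, rfl⟩, (hiff x).2 hx⟩

lemma finrank_range_of_trace_eq [CharZero K] [FiniteDimensional K V] {P : Module.End K V}
    (hP : IsIdempotentElem P) {n : ℕ} (hn : LinearMap.trace K V P = n) :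
    Module.finrank K (LinearMap.range P) = n := by
  rw [(LinearMap.IsIdempotentElem.isProj_range P hP).trace] at hn
  exact_mod_cast hn

lemma completeOrthogonalIdempotents_of_involution {A : Type*} [Ring A] [Algebra K A]
    [NeZero (2 : K)] {c p q : A} (hc : c * c = 1) (hp : IsIdempotentElem p)
    (hq : IsIdempotentElem q) (hpq : p * q = 0) (hqp : q * p = 0) (hcp : c * p = p)
    (hpc : p * c = p) (hcq : c * q = q) (hqc : q * c = q) :
    CompleteOrthogonalIdempotents
      ![p, q, (2⁻¹ : K) • (1 + c) - p - q, (2⁻¹ : K) • (1 - c)] := by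
  have half (a : A) : (2⁻¹ : K) • (a + a) = a := by
    rw [← two_smul K, inv_smul_smul₀ two_ne_zero]
  set e : A := (2⁻¹ : K) • (1 + c) with he
  have hf : (2⁻¹ : K) • (1 - c) = 1 - e := by
    rw [eq_sub_iff_add_eq, he, ← smul_add]
    convert half 1 using 2
    abel
  have hce : c * e = e := by rw [he, mul_smul_comm, mul_add, hc, mul_one, add_comm]
  have hee : e * e = e := by
    nth_rw 1 [he]
    rw [smul_mul_assoc, add_mul, one_mul, hce, half]
  have hep : e * p = p := by rw [he, smul_mul_assoc, add_mul, one_mul, hcp, half]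
  have heq : e * q = q := by rw [he, smul_mul_assoc, add_mul, one_mul, hcq, half]
  have hpe : p * e = p := by rw [he, mul_smul_comm, mul_add, mul_one, hpc, half]
  have hqe : q * e = q := by rw [he, mul_smul_comm, mul_add, mul_one, hqc, half]
  have hpp : p * p = p := hp
  have hqq : q * q = q := hq
  rw [hf]
  refine ⟨⟨fun i ↦ ?_, fun i j hij ↦ ?_⟩, ?_⟩
  · fin_cases i <;>
      simp [IsIdempotentElem, mul_sub, sub_mul, hpp, hqq, hee, hep, heq, hpe, hqe, hpq, hqp]
  · fin_cases i <;> fin_cases j <;>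
      simp [mul_sub, sub_mul, hpp, hqq, hee, hep, heq, hpe, hqe, hpq, hqp] at hij ⊢
  · simp [Fin.sum_univ_four]

lemma trace_funLeft_eq_zero {ι : Type*} [Finite ι] {e : ι → ι} (he : ∀ i, e i ≠ i) :
    LinearMap.trace K (ι → K) (LinearMap.funLeft K K e) = 0 := by
  classical
  have := Fintype.ofFinite ι
  rw [LinearMap.trace_eq_matrix_trace K (Pi.basisFun K ι)]
  refine Finset.sum_eq_zero fun i _ ↦ ?_
  simp [LinearMap.funLeft_apply, he i]

end Spectral

section FiberAverage

open Finset

variable {K ι κ : Type*} [Field K] [Fintype ι] [DecidableEq ι] [DecidableEq κ] (f : ι → κ)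

/-- The operator on `ι → K` which replaces a vector by its average over the fibres of `f` lying
over `s`, and by `0` over the complement of `s`. -/
def fiberAverage (s : Finset κ) : Module.End K (ι → K) :=
  Matrix.toLin' <| Matrix.of fun i j ↦
    if f i ∈ s ∧ f j = f i then (#{k | f k = f i} : K)⁻¹ else 0

lemma fiberAverage_apply (s : Finset κ) (y : ι → K) (i : ι) :
    fiberAverage f s y i =
      if f i ∈ s then (#{k | f k = f i} : K)⁻¹ * ∑ j with f j = f i, y j else 0 := by
  by_cases hi : f i ∈ s
  · simp [fiberAverage, Matrix.toLin'_apply, Matrix.mulVec, dotProduct, hi, mul_sum, sum_filter]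
  · simp [fiberAverage, Matrix.toLin'_apply, Matrix.mulVec, dotProduct, hi]

lemma fiberAverage_empty : fiberAverage (K := K) f ∅ = 0 := by
  ext; simp [fiberAverage_apply]

lemma fiberAverage_mul_fiberAverage [CharZero K] (s t : Finset κ) :
    fiberAverage (K := K) f s * fiberAverage f t = fiberAverage f (s ∩ t) := by
  refine LinearMap.ext fun y ↦ funext fun i ↦ ?_
  have hcard : (#{k | f k = f i} : K) ≠ 0 :=
    Nat.cast_ne_zero.2 (card_ne_zero_of_mem (mem_filter.2 ⟨mem_univ i, rfl⟩))
  have hconst : ∀ j ∈ ({j | f j = f i} : Finset ι), fiberAverage f t y j = fiberAverage f t y i :=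
    fun j hj ↦ by simp only [fiberAverage_apply, (mem_filter.1 hj).2]
  rw [Module.End.mul_apply, fiberAverage_apply, sum_congr rfl hconst, sum_const, nsmul_eq_mul,
    inv_mul_cancel_left₀ hcard, fiberAverage_apply, fiberAverage_apply]
  simp only [mem_inter, ite_and]

lemma isIdempotentElem_fiberAverage [CharZero K] (s : Finset κ) :
    IsIdempotentElem (fiberAverage (K := K) f s) := by
  rw [IsIdempotentElem, fiberAverage_mul_fiberAverage, inter_self]

lemma fiberAverage_mul_eq_zero [CharZero K] {s t : Finset κ} (hst : Disjoint s t) :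
    fiberAverage (K := K) f s * fiberAverage f t = 0 := by
  rw [fiberAverage_mul_fiberAverage, disjoint_iff_inter_eq_empty.1 hst, fiberAverage_empty]

variable {f}

lemma funLeft_mul_fiberAverage {e : ι ≃ ι} (he : ∀ i, f (e i) = f i) (s : Finset κ) :
    LinearMap.funLeft K K e * fiberAverage f s = fiberAverage f s := by
  refine LinearMap.ext fun y ↦ funext fun i ↦ ?_
  simp only [Module.End.mul_apply, LinearMap.funLeft_apply, fiberAverage_apply, he]

lemma fiberAverage_mul_funLeft {e : ι ≃ ι} (he : ∀ i, f (e i) = f i) (s : Finset κ) :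
    fiberAverage f s * LinearMap.funLeft K K e = fiberAverage f s := by
  refine LinearMap.ext fun y ↦ funext fun i ↦ ?_
  have hsum : ∑ j with f j = f i, y (e j) = ∑ j with f j = f i, y j :=
    sum_equiv e (by simp [he]) (by simp)
  simp only [Module.End.mul_apply, LinearMap.funLeft_apply, fiberAverage_apply, hsum]

lemma trace_fiberAverage [CharZero K] {s : Finset κ} (hs : ∀ c ∈ s, ∃ i, f i = c) :
    LinearMap.trace K (ι → K) (fiberAverage f s) = #s := by
  have hfiber : ∀ c ∈ s, ∑ i with f i = c, (#{k | f k = f i} : K)⁻¹ = 1 := fun c hc ↦ by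
    obtain ⟨i, hi⟩ := hs c hc
    have hcard : (#{k | f k = c} : K) ≠ 0 :=
      Nat.cast_ne_zero.2 (card_ne_zero_of_mem (mem_filter.2 ⟨mem_univ i, hi⟩))
    rw [sum_congr rfl fun j hj ↦ by rw [(mem_filter.1 hj).2], sum_const, nsmul_eq_mul,
      mul_inv_cancel₀ hcard]
  calc LinearMap.trace K (ι → K) (fiberAverage f s)
      = ∑ i with f i ∈ s, (#{k | f k = f i} : K)⁻¹ := by
        simp [fiberAverage, Matrix.trace, sum_filter]
    _ = ∑ c ∈ s, ∑ i with f i = c, (#{k | f k = f i} : K)⁻¹ := by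
        rw [← sum_fiberwise_of_maps_to (g := f) (t := s) (by simp)]
        refine sum_congr rfl fun c hc ↦ sum_congr ?_ fun _ _ ↦ rfl
        ext i
        simp only [mem_filter, mem_univ, true_and, and_iff_right_iff_imp]
        rintro rfl
        exact hc
    _ = #s := by rw [sum_congr rfl hfiber, sum_const, nsmul_one]

end FiberAverage

section Combinatorics

open Finset

lemma forall_of_monotone_of_swap {α : Type*} [LinearOrder α] {n : ℕ} {P : (Fin (n + 1) → α) → Prop}
    (hP : ∀ v (i : Fin n), P (v ∘ Equiv.swap i.castSucc i.succ) → P v)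
    (hmono : ∀ v, Monotone v → P v) (v : Fin (n + 1) → α) : P v := by
  suffices h : ∀ g : Equiv.Perm (Fin (n + 1)), ∀ v, P (v ∘ g) → P v from
    h (Tuple.sort v) v (hmono _ (Tuple.monotone_sort v))
  intro g
  have hg : g ∈ Submonoid.closure
      (Set.range fun i : Fin n ↦ Equiv.swap i.castSucc i.succ) := by
    rw [Equiv.Perm.mclosure_swap_castSucc_succ]
    exact Submonoid.mem_top g
  induction hg using Submonoid.closure_induction with
  | mem g hg =>
    obtain ⟨i, rfl⟩ := hg
    exact fun v ↦ hP v i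
  | one => exact fun v hv ↦ hv
  | mul g g' _ _ hg hg' => exact fun v hv ↦ hg v (hg' (v ∘ g) hv)

section Sums

variable {α M : Type*} [Fintype α] [AddCommMonoid M]

lemma sum_fin_succ_arrow {n : ℕ} (h : (Fin (n + 1) → α) → M) :
    ∑ v, h v = ∑ a, ∑ v : Fin n → α, h (Matrix.vecCons a v) := by
  rw [← Equiv.sum_comp (Fin.consEquiv fun _ ↦ α), Fintype.sum_prod_type]
  rfl

variable [DecidableEq α]

lemma card_filter_image_eq {s : Finset α} {n : ℕ} (hs : #s = n) :
    #{v : Fin n → α | univ.image v = s} = n.factorial := by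
  have hcard : Fintype.card (Fin n ↪ s) = n.factorial := by
    rw [Fintype.card_embedding_eq, Fintype.card_coe, hs, Fintype.card_fin, Nat.descFactorial_self]
  rw [← hcard, ← card_univ]
  refine (card_bij (fun f _ i ↦ (f i : α)) (fun f _ ↦ ?_) (fun f _ g _ hfg ↦ ?_)
    fun v hv ↦ ?_).symm
  · have hinj : Function.Injective fun i ↦ (f i : α) := Subtype.val_injective.comp f.injective
    refine mem_filter.2 ⟨mem_univ _, eq_of_subset_of_card_le ?_ ?_⟩
    · exact image_subset_iff.2 fun i _ ↦ (f i).2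
    · rw [card_image_of_injective _ hinj, card_univ, Fintype.card_fin, hs]
  · exact DFunLike.ext _ _ fun i ↦ Subtype.ext (congr_fun hfg i)
  · have hv : univ.image v = s := (mem_filter.1 hv).2
    have hinj : Set.InjOn v (univ : Finset (Fin n)) := by
      rw [← card_image_iff, hv, hs, card_univ, Fintype.card_fin]
    exact ⟨⟨fun i ↦ ⟨v i, hv ▸ mem_image_of_mem v (mem_univ i)⟩, fun i j hij ↦
      hinj (mem_coe.2 (mem_univ i)) (mem_coe.2 (mem_univ j)) (congr_arg Subtype.val hij)⟩,
      mem_univ _, rfl⟩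

lemma sum_apply_image {n : ℕ} {h : Finset α → M} (hh : ∀ s, #s ≠ n → h s = 0) :
    ∑ v : Fin n → α, h (univ.image v) = n.factorial • ∑ s ∈ univ.powersetCard n, h s := by
  have hfiber (s : Finset α) : ∑ v : Fin n → α with univ.image v = s, h (univ.image v) =
      #{v : Fin n → α | univ.image v = s} • h s := by
    rw [← sum_const]
    exact sum_congr rfl fun v hv ↦ by rw [(mem_filter.1 hv).2]
  rw [← sum_fiberwise univ fun v : Fin n → α ↦ univ.image v, smul_sum]
  refine (sum_subset (subset_univ _) fun s _ hs ↦ ?_).symm.trans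
    (sum_congr rfl fun s hs ↦ ?_)
  · rw [hfiber, hh s (by simpa using hs), smul_zero]
  · rw [hfiber, card_filter_image_eq (mem_powersetCard_univ.1 hs)]

lemma sum_sum_apply_pair {h : Finset α → M} (hh : ∀ s, #s ≠ 2 → h s = 0) :
    ∑ p, ∑ q, h {p, q} = 2 • ∑ s ∈ univ.powersetCard 2, h s := by
  have h2 := sum_apply_image hh
  simpa [sum_fin_succ_arrow, Fin.univ_succ] using h2

lemma sum_apply_quadruple {h : Finset α → M} (hh : ∀ s, #s ≠ 4 → h s = 0) :
    ∑ a, ∑ b, ∑ c, ∑ d, h {a, b, c, d} = 24 • ∑ s ∈ univ.powersetCard 4, h s := by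
  have h4 := sum_apply_image hh
  simpa [sum_fin_succ_arrow, Fin.univ_succ, Nat.factorial] using h4

end Sums

lemma sum_powersetCard_two_insert {α M : Type*} [DecidableEq α] [AddCommMonoid M] {a : α}
    {s : Finset α} (ha : a ∉ s) (g : Finset α → M) :
    ∑ t ∈ powersetCard 2 (insert a s), g t =
      ∑ b ∈ s, g {a, b} + ∑ t ∈ powersetCard 2 s, g t := by
  have hdisj : Disjoint (powersetCard 2 s) ((powersetCard 1 s).image (insert a)) := by
    refine disjoint_left.2 fun t ht ht' ↦ ?_
    obtain ⟨u, -, rfl⟩ := mem_image.1 ht'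
    exact ha ((mem_powersetCard.1 ht).1 (mem_insert_self a u))
  have hinj : Set.InjOn (insert a) (powersetCard 1 s : Set (Finset α)) := fun u hu v hv huv ↦ by
    have hnot {w : Finset α} (hw : w ∈ powersetCard 1 s) : a ∉ w :=
      fun h ↦ ha ((mem_powersetCard.1 hw).1 h)
    rw [← erase_insert (hnot hu), huv, erase_insert (hnot hv)]
  rw [powersetCard_succ_insert ha, sum_union hdisj, sum_image hinj, powersetCard_one, sum_map,
    add_comm]
  rfl

lemma sum_powersetCard_two {α M : Type*} [DecidableEq α] [AddCommMonoid M] {i j k l : α}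
    (hij : i ≠ j) (hik : i ≠ k) (hil : i ≠ l) (hjk : j ≠ k) (hjl : j ≠ l) (hkl : k ≠ l)
    (g : Finset α → M) : ∑ s ∈ powersetCard 2 {i, j, k, l}, g s =
      g {i, j} + g {i, k} + g {i, l} + g {j, k} + g {j, l} + g {k, l} := by
  have hempty : powersetCard 2 {l} = ∅ := powersetCard_eq_empty.2 (by simp)
  rw [sum_powersetCard_two_insert (by simp [*]), sum_powersetCard_two_insert (by simp [*]),
    sum_powersetCard_two_insert (by simp [*]), hempty]
  simp [*, add_assoc]

lemma sum_ne_sum_of_card_sdiff_eq_one {α G : Type*} [DecidableEq α] [AddCommGroup G] {f : α → G}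
    (hf : Function.Injective f) {s t : Finset α} (hst : #(s \ t) = 1) (hts : #(t \ s) = 1) :
    ∑ i ∈ s, f i ≠ ∑ i ∈ t, f i := by
  obtain ⟨a, ha⟩ := card_eq_one.1 hst
  obtain ⟨b, hb⟩ := card_eq_one.1 hts
  intro h
  have hfab : f a = f b := by
    rw [← sub_eq_zero, ← sum_singleton f a, ← sum_singleton f b, ← ha, ← hb,
      sum_sdiff_sub_sum_sdiff, h, sub_self]
  have ha' : a ∈ s \ t := ha ▸ mem_singleton_self a
  have hb' : b ∈ t \ s := hb ▸ mem_singleton_self b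
  exact (mem_sdiff.1 hb').2 (hf hfab ▸ (mem_sdiff.1 ha').1)

end Combinatorics

section Forms

open Finset

/-- The space of all 4-tensors on `ℝ⁸`, in components. -/
abbrev FourTensor : Type := Fin 8 → Fin 8 → Fin 8 → Fin 8 → ℝ

variable {σ τ : FourTensor}

lemma FourForm.apply_eq_zero (hσ : σ ∈ FourForm) {i j k l : Fin 8} (h : i = j ∨ j = k ∨ k = l) :
    σ i j k l = 0 := by
  obtain ⟨h₁, h₂, h₃⟩ := hσ i j k l
  obtain rfl | rfl | rfl := h
  · linarith
  · linarith
  · linarith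

lemma FourForm.ext (hσ : σ ∈ FourForm) (hτ : τ ∈ FourForm)
    (h : ∀ i j k l, i < j → j < k → k < l → σ i j k l = τ i j k l) : σ = τ := by
  suffices hv : ∀ v : Fin 4 → Fin 8, σ (v 0) (v 1) (v 2) (v 3) = τ (v 0) (v 1) (v 2) (v 3) by
    funext i j k l
    exact hv ![i, j, k, l]
  refine forall_of_monotone_of_swap (fun v i hv ↦ ?_) fun v hv ↦ ?_
  · have hσv := hσ (v 0) (v 1) (v 2) (v 3)
    have hτv := hτ (v 0) (v 1) (v 2) (v 3)
    fin_cases i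
    · have hv' : σ (v 1) (v 0) (v 2) (v 3) = τ (v 1) (v 0) (v 2) (v 3) := hv
      rw [hσv.1, hτv.1, hv']
    · have hv' : σ (v 0) (v 2) (v 1) (v 3) = τ (v 0) (v 2) (v 1) (v 3) := hv
      rw [hσv.2.1, hτv.2.1, hv']
    · have hv' : σ (v 0) (v 1) (v 3) (v 2) = τ (v 0) (v 1) (v 3) (v 2) := hv
      rw [hσv.2.2, hτv.2.2, hv']
  · by_cases hstrict : v 0 < v 1 ∧ v 1 < v 2 ∧ v 2 < v 3
    · exact h _ _ _ _ hstrict.1 hstrict.2.1 hstrict.2.2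
    · have h01 : v 0 ≤ v 1 := hv (by decide)
      have h12 : v 1 ≤ v 2 := hv (by decide)
      have h23 : v 2 ≤ v 3 := hv (by decide)
      have heq : v 0 = v 1 ∨ v 1 = v 2 ∨ v 2 = v 3 := by
        by_contra! hne
        exact hstrict ⟨h01.lt_of_ne hne.1, h12.lt_of_ne hne.2.1, h23.lt_of_ne hne.2.2⟩
      rw [FourForm.apply_eq_zero hσ heq, FourForm.apply_eq_zero hτ heq]

lemma wedge4_eq_det (a b c d i j k l : Fin 8) :
    wedge4 a b c d i j k l =
      (Matrix.of fun r s ↦ kd (![a, b, c, d] r) (![i, j, k, l] s)).det := by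
  rw [wedge4]
  congr 1
  ext r s
  fin_cases r <;> fin_cases s <;> rfl

lemma wedge4_mem (a b c d : Fin 8) : wedge4 a b c d ∈ FourForm := by
  have hswap (v : Fin 4 → Fin 8) {r s : Fin 4} (hrs : r ≠ s) :
      (Matrix.of fun p q ↦ kd (![a, b, c, d] p) (v q)).det =
        -(Matrix.of fun p q ↦ kd (![a, b, c, d] p) (v (Equiv.swap r s q))).det := by
    have h := Matrix.det_permute' (Equiv.swap r s)
      (Matrix.of fun p q ↦ kd (![a, b, c, d] p) (v (Equiv.swap r s q)))
    rw [Equiv.Perm.sign_swap hrs] at h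
    simpa [Matrix.submatrix] using h
  intro i j k l
  simp only [wedge4_eq_det]
  refine ⟨?_, ?_, ?_⟩
  · rw [hswap ![i, j, k, l] (show (0 : Fin 4) ≠ 1 by decide)]
    congr 3; ext p q; fin_cases q <;> rfl
  · rw [hswap ![i, j, k, l] (show (1 : Fin 4) ≠ 2 by decide)]
    congr 3; ext p q; fin_cases q <;> rfl
  · rw [hswap ![i, j, k, l] (show (2 : Fin 4) ≠ 3 by decide)]
    congr 3; ext p q; fin_cases q <;> rfl

lemma det_indicator_of_strictMono {n : ℕ} {α R : Type*} [LinearOrder α] [CommRing R]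
    {v w : Fin n → α} (hv : StrictMono v) (hw : StrictMono w) :
    (Matrix.of fun r s ↦ if v r = w s then (1 : R) else 0).det = if v = w then 1 else 0 := by
  split_ifs with hvw
  · subst hvw
    rw [← Matrix.det_one (n := Fin n)]
    congr 1
    ext r s
    simp [Matrix.one_apply, hv.injective.eq_iff]
  · have hrange : Set.range v ≠ Set.range w := fun h ↦ hvw ((hv.range_inj hw).1 h)
    obtain ⟨x, hx⟩ := not_forall.1 fun h ↦ hrange (Set.ext h)
    obtain ⟨⟨r, rfl⟩, hr⟩ | ⟨hs, s, rfl⟩ : (x ∈ Set.range v ∧ x ∉ Set.range w) ∨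
        (x ∉ Set.range v ∧ x ∈ Set.range w) := by tauto
    · exact Matrix.det_eq_zero_of_row_eq_zero r fun s ↦ if_neg fun h ↦ hr ⟨s, h.symm⟩
    · exact Matrix.det_eq_zero_of_column_eq_zero s fun r ↦ if_neg fun h ↦ hs ⟨r, h⟩

lemma strictMono_quadruple {α : Type*} [Preorder α] {i j k l : α} (hij : i < j) (hjk : j < k)
    (hkl : k < l) : StrictMono ![i, j, k, l] :=
  Fin.strictMono_iff_lt_succ.2 fun r ↦ by fin_cases r <;> assumption

lemma wedge4_of_lt {a b c d i j k l : Fin 8} (hab : a < b) (hbc : b < c) (hcd : c < d)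
    (hij : i < j) (hjk : j < k) (hkl : k < l) :
    wedge4 a b c d i j k l = ((if ![a, b, c, d] = ![i, j, k, l] then 1 else 0 : ℤ) : ℝ) := by
  rw [wedge4_eq_det, Int.cast_ite, Int.cast_one, Int.cast_zero]
  exact det_indicator_of_strictMono (strictMono_quadruple hab hbc hcd)
    (strictMono_quadruple hij hjk hkl)

lemma phi_mem : Phi ∈ FourForm := by
  have h : Phi = -wedge4 0 1 2 7 + wedge4 0 2 3 6 - wedge4 0 3 4 7 - wedge4 0 5 6 7
      + wedge4 0 1 4 6 + wedge4 0 2 4 5 - wedge4 0 1 3 5 - wedge4 3 4 5 6 - wedge4 1 4 5 7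
      - wedge4 1 2 5 6 - wedge4 1 2 3 4 - wedge4 2 3 5 7 - wedge4 1 3 6 7 + wedge4 2 4 6 7 := rfl
  generalize hw : wedge4 = w at h
  have hmem : ∀ a b c d, w a b c d ∈ FourForm := hw ▸ wedge4_mem
  rw [h]
  apply_rules [Submodule.add_mem, Submodule.sub_mem, Submodule.neg_mem]

/-- The double contraction `σ_{abpq} τ_{pqcd}` of two 4-tensors. -/
def doubleContraction (σ τ : FourTensor) (a b c d : Fin 8) : ℝ :=
  ∑ p, ∑ q, σ a b p q * τ p q c d

lemma doubleContraction_swap_left (hσ : σ ∈ FourForm) (a b c d : Fin 8) :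
    doubleContraction σ τ b a c d = -doubleContraction σ τ a b c d := by
  simp only [doubleContraction, ← sum_neg_distrib, ← neg_mul, ← (hσ _ _ _ _).1]

lemma doubleContraction_swap_right (hτ : τ ∈ FourForm) (a b c d : Fin 8) :
    doubleContraction σ τ a b d c = -doubleContraction σ τ a b c d := by
  simp only [doubleContraction, ← sum_neg_distrib, ← mul_neg, ← (hτ _ _ _ _).2.2]

lemma omegaOp_apply (σ : FourTensor) (i j k l : Fin 8) :
    OmegaOp σ i j k l =
      doubleContraction σ Phi i j k l + doubleContraction σ Phi i k l j
      + doubleContraction σ Phi i l j k + doubleContraction σ Phi j k i l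
      + doubleContraction σ Phi j l k i + doubleContraction σ Phi k l i j :=
  rfl

lemma omegaOp_mem (hσ : σ ∈ FourForm) : OmegaOp σ ∈ FourForm := by
  have hl := doubleContraction_swap_left (τ := Phi) hσ
  have hr := doubleContraction_swap_right (σ := σ) phi_mem
  intro i j k l
  simp only [omegaOp_apply]
  refine ⟨?_, ?_, ?_⟩
  · rw [hl i j k l, hr j k i l, hr j l k i, hr i k l j, hr i l j k, hr k l i j]
    ring
  · rw [hr i k l j, hr i j k l, hr i l j k, hl j k i l, hr k l i j, hr j l k i]
    ring
  · rw [hr i j k l, hr i l j k, hr i k l j, hr j l k i, hr j k i l, hl k l i j]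
    ring

lemma eps8_comp_swap (f : Fin 8 → Fin 8) {r s : Fin 8} (hrs : r ≠ s) :
    eps8 (f ∘ Equiv.swap r s) = -eps8 f := by
  by_cases hf : Function.Bijective f
  · have hfs : Function.Bijective (f ∘ Equiv.swap r s) := hf.comp (Equiv.swap r s).bijective
    have hperm : Equiv.ofBijective _ hfs = Equiv.ofBijective f hf * Equiv.swap r s :=
      Equiv.ext fun _ ↦ rfl
    rw [eps8, eps8, dif_pos hf, dif_pos hfs, hperm, Equiv.Perm.sign_mul,
      Equiv.Perm.sign_swap hrs]
    push_cast
    ring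
  · have hfs : ¬ Function.Bijective (f ∘ Equiv.swap r s) := fun h ↦
      hf ((Equiv.swap r s).bijective.of_comp_iff _ |>.1 h)
    rw [eps8, eps8, dif_neg hf, dif_neg hfs, neg_zero]

lemma eps8_of_bijective {f : Fin 8 → Fin 8} (hf : Function.Bijective f) :
    eps8 f = ((∏ i, ∏ j ∈ Ioi i, if f i < f j then 1 else -1 : ℤ) : ℝ) := by
  rw [eps8, dif_pos hf, Equiv.Perm.sign_eq_prod_prod_Ioi]
  simp [apply_ite]

lemma eps8_eq_neg {f g : Fin 8 → Fin 8} {r s : Fin 8} (hrs : r ≠ s)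
    (hfg : f ∘ Equiv.swap r s = g) : eps8 f = -eps8 g := by
  rw [← hfg, eps8_comp_swap f hrs, neg_neg]

lemma eps8_mem (i j k l : Fin 8) : (fun a b c d ↦ eps8 ![i, j, k, l, a, b, c, d]) ∈ FourForm :=
  fun a b c d ↦
    ⟨eps8_eq_neg (r := 4) (s := 5) (by decide) (by ext r; fin_cases r <;> rfl),
      eps8_eq_neg (r := 5) (s := 6) (by decide) (by ext r; fin_cases r <;> rfl),
      eps8_eq_neg (r := 6) (s := 7) (by decide) (by ext r; fin_cases r <;> rfl)⟩

lemma hodgeOp_apply (σ : FourTensor) (i j k l : Fin 8) :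
    hodgeOp σ i j k l =
      (1 / 24) * ∑ a, ∑ b, ∑ c, ∑ d, eps8 ![i, j, k, l, a, b, c, d] * σ a b c d :=
  rfl

lemma hodgeOp_mem (σ : FourTensor) : hodgeOp σ ∈ FourForm := by
  have hneg {i j k l i' j' k' l' : Fin 8} (h : ∀ a b c d,
      eps8 ![i, j, k, l, a, b, c, d] = -eps8 ![i', j', k', l', a, b, c, d]) :
      hodgeOp σ i j k l = -hodgeOp σ i' j' k' l' := by
    simp only [hodgeOp_apply, h, neg_mul, sum_neg_distrib, mul_neg]
  exact fun i j k l ↦ ⟨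
    hneg fun a b c d ↦
      eps8_eq_neg (r := 0) (s := 1) (by decide) (by ext r; fin_cases r <;> rfl),
    hneg fun a b c d ↦
      eps8_eq_neg (r := 1) (s := 2) (by decide) (by ext r; fin_cases r <;> rfl),
    hneg fun a b c d ↦
      eps8_eq_neg (r := 2) (s := 3) (by decide) (by ext r; fin_cases r <;> rfl)⟩

end Forms

section Coordinates

open Finset

/-- The labelling of the standard basis `e₀, …, e₇` by the points of the affine space `𝔽₂³` for
which the fourteen quadruples occurring in `Phi` are the affine planes. -/
def pointLabel : Fin 8 ≃ ZMod 2 × ZMod 2 × ZMod 2 where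
  toFun := ![(0, 0, 0), (1, 0, 0), (0, 1, 0), (0, 0, 1), (1, 1, 1), (1, 0, 1), (0, 1, 1), (1, 1, 0)]
  invFun v := ![![![0, 3], ![2, 6]], ![![1, 5], ![7, 4]]] v.1 v.2.1 v.2.2
  left_inv := by decide
  right_inv := by decide

/-- The sum of the labels of a set of indices. Among the sets of four indices, those of syndrome
`0` are the affine planes of `𝔽₂³`. -/
def syndrome (s : Finset (Fin 8)) : ZMod 2 × ZMod 2 × ZMod 2 :=
  ∑ i ∈ s, pointLabel i

/-- The signs `A_{ij}` in `e_i e_j ψ = A_{ij} u_{i+j}`, where `ψ` is the spinor fixed by `Spin(7)`,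
the `u_c` form an orthonormal basis of its half-spin representation, and `i + j` stands for the sum
of the labels of `i` and `j`. -/
def spinorSign (i j : Fin 8) : ℤ :=
  !![-1,  1,  1,  1,  1,  1,  1,  1;
     -1, -1,  1,  1, -1, -1,  1, -1;
     -1, -1, -1, -1, -1,  1,  1,  1;
     -1, -1,  1, -1,  1,  1, -1, -1;
     -1,  1,  1, -1, -1, -1, -1,  1;
     -1,  1, -1, -1,  1, -1,  1, -1;
     -1, -1, -1,  1,  1, -1, -1,  1;
     -1,  1, -1,  1, -1,  1, -1, -1] i j

/-- The index whose label is the sum of the labels of `j`, `k` and `l`. -/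
def fourthPoint (j k l : Fin 8) : Fin 8 :=
  pointLabel.symm (pointLabel j + pointLabel k + pointLabel l)

/-- The sign of `e_i e_j e_k e_l ψ` in the basis `u_c`, computed by moving `e_k e_l ψ` to `u_{k+l}`,
then `e_j u_{k+l}` to `± e_m ψ` with `m = fourthPoint j k l`, and finally `e_i e_m ψ` to
`u_{i+m}`. -/
def quadSign (i j k l : Fin 8) : ℤ :=
  spinorSign i (fourthPoint j k l) * spinorSign (fourthPoint j k l) j * spinorSign k l

lemma spinorSign_sq : ∀ i j, spinorSign i j ^ 2 = 1 := by
  decide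

lemma quadSign_mul_self (i j k l : Fin 8) : quadSign i j k l * quadSign i j k l = 1 := by
  rw [← sq, quadSign, mul_pow, mul_pow, spinorSign_sq, spinorSign_sq, spinorSign_sq, one_mul,
    one_mul]

lemma quadSign_swap : ∀ i j k l, #{i, j, k, l} = 4 →
    quadSign i j k l = -quadSign j i k l ∧ quadSign i j k l = -quadSign i k j l ∧
      quadSign i j k l = -quadSign i j l k := by
  decide +kernel

/-- The extension by zero of a function on the sets of four indices to all sets of indices. -/
def extendCoords : (Set.powersetCard (Fin 8) 4 → ℝ) →ₗ[ℝ] (Finset (Fin 8) → ℝ) :=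
  Function.ExtendByZero.linearMap ℝ Subtype.val

lemma extendCoords_coe (y : Set.powersetCard (Fin 8) 4 → ℝ) (s : Set.powersetCard (Fin 8) 4) :
    extendCoords y s = y s :=
  Subtype.val_injective.extend_apply y 0 s

lemma extendCoords_of_card_ne (y : Set.powersetCard (Fin 8) 4 → ℝ) {s : Finset (Fin 8)}
    (hs : #s ≠ 4) : extendCoords y s = 0 :=
  Function.extend_apply' y (fun _ ↦ 0) s fun ⟨t, ht⟩ ↦ hs (ht ▸ t.2)

lemma sum_coe_powersetCard {M : Type*} [AddCommMonoid M] (g : Finset (Fin 8) → M) :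
    ∑ s : Set.powersetCard (Fin 8) 4, g s = ∑ s ∈ univ.powersetCard 4, g s :=
  (sum_subtype _ (fun _ ↦ mem_powersetCard_univ) g).symm

/-- The 4-form whose component at distinct indices `i, j, k, l` is
`quadSign i j k l * y {i, j, k, l}`. -/
def ofCoords : (Set.powersetCard (Fin 8) 4 → ℝ) →ₗ[ℝ] FourTensor where
  toFun y i j k l := quadSign i j k l * extendCoords y {i, j, k, l}
  map_add' y z := by
    funext i j k l
    simp only [map_add, Pi.add_apply, mul_add]
  map_smul' c y := by
    funext i j k l
    simp only [map_smul, Pi.smul_apply, smul_eq_mul, RingHom.id_apply, mul_left_comm]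

lemma ofCoords_apply (y : Set.powersetCard (Fin 8) 4 → ℝ) (i j k l : Fin 8) :
    ofCoords y i j k l = quadSign i j k l * extendCoords y {i, j, k, l} :=
  rfl

lemma ofCoords_mem (y : Set.powersetCard (Fin 8) 4 → ℝ) : ofCoords y ∈ FourForm := by
  intro i j k l
  have hij : ({j, i, k, l} : Finset (Fin 8)) = {i, j, k, l} := insert_comm j i {k, l}
  have hjk : ({i, k, j, l} : Finset (Fin 8)) = {i, j, k, l} := by rw [insert_comm k j]
  have hkl : ({i, j, l, k} : Finset (Fin 8)) = {i, j, k, l} := by rw [pair_comm l k]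
  simp only [ofCoords_apply, hij, hjk, hkl]
  by_cases hs : #{i, j, k, l} = 4
  · obtain ⟨h₁, h₂, h₃⟩ := quadSign_swap i j k l hs
    refine ⟨?_, ?_, ?_⟩
    · rw [h₁, Int.cast_neg, neg_mul]
    · rw [h₂, Int.cast_neg, neg_mul]
    · rw [h₃, Int.cast_neg, neg_mul]
  · simp only [extendCoords_of_card_ne y hs, mul_zero, neg_zero, and_self]

lemma quadSign_mul_ofCoords (y : Set.powersetCard (Fin 8) 4 → ℝ) (i j k l : Fin 8) :
    quadSign i j k l * ofCoords y i j k l = extendCoords y {i, j, k, l} := by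
  rw [ofCoords_apply, ← mul_assoc, ← Int.cast_mul, quadSign_mul_self, Int.cast_one, one_mul]

lemma sum_ofCoords_mul_ofCoords (y z : Set.powersetCard (Fin 8) 4 → ℝ) :
    ∑ a, ∑ b, ∑ c, ∑ d, ofCoords y a b c d * ofCoords z a b c d = 24 * ∑ s, y s * z s := by
  have hterm (a b c d : Fin 8) : ofCoords y a b c d * ofCoords z a b c d =
      extendCoords y {a, b, c, d} * extendCoords z {a, b, c, d} := by
    have hsign : (quadSign a b c d * quadSign a b c d : ℝ) = 1 := by
      exact_mod_cast quadSign_mul_self a b c d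
    rw [ofCoords_apply, ofCoords_apply, mul_mul_mul_comm, hsign, one_mul]
  simp only [hterm]
  rw [sum_apply_quadruple (h := fun s ↦ extendCoords y s * extendCoords z s)
    fun s hs ↦ by rw [extendCoords_of_card_ne y hs, zero_mul], ← sum_coe_powersetCard]
  simp only [extendCoords_coe, nsmul_eq_mul, Nat.cast_ofNat]

lemma eq_quadruple_orderEmbOfFin {α : Type*} [LinearOrder α] {s : Finset α} (hs : #s = 4) :
    s = {s.orderEmbOfFin hs 0, s.orderEmbOfFin hs 1, s.orderEmbOfFin hs 2,
      s.orderEmbOfFin hs 3} := by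
  conv_lhs => rw [← image_orderEmbOfFin_univ s hs]
  simp [Fin.univ_succ]

lemma card_quadruple_of_lt {α : Type*} [LinearOrder α] {i j k l : α} (hij : i < j) (hjk : j < k)
    (hkl : k < l) : #{i, j, k, l} = 4 := by
  simpa [Fin.univ_succ] using
    card_image_of_injective univ (strictMono_quadruple hij hjk hkl).injective

lemma ofCoords_injective : Function.Injective ofCoords := by
  intro y z hyz
  funext s
  rw [← extendCoords_coe y, ← extendCoords_coe z, eq_quadruple_orderEmbOfFin s.2,
    ← quadSign_mul_ofCoords, ← quadSign_mul_ofCoords, hyz]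

lemma range_ofCoords : LinearMap.range ofCoords = FourForm := by
  refine le_antisymm (fun _ ⟨y, hy⟩ ↦ hy ▸ ofCoords_mem y) fun σ hσ ↦ ?_
  set y : Set.powersetCard (Fin 8) 4 → ℝ := fun s ↦
    let e := s.1.orderEmbOfFin s.2
    quadSign (e 0) (e 1) (e 2) (e 3) * σ (e 0) (e 1) (e 2) (e 3) with hy
  refine ⟨y, FourForm.ext (ofCoords_mem y) hσ fun i j k l hij hjk hkl ↦ ?_⟩
  have hcard := card_quadruple_of_lt hij hjk hkl
  have he := orderEmbOfFin_unique hcard (f := ![i, j, k, l])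
    (fun r ↦ by fin_cases r <;> simp) (strictMono_quadruple hij hjk hkl)
  have hyS : extendCoords y {i, j, k, l} = quadSign i j k l * σ i j k l := by
    rw [extendCoords_coe y ⟨{i, j, k, l}, hcard⟩]
    simp only [hy, ← he]
    rfl
  rw [ofCoords_apply, hyS, ← mul_assoc, ← Int.cast_mul, quadSign_mul_self, Int.cast_one, one_mul]

lemma finrank_fourForm : Module.finrank ℝ FourForm = 70 := by
  rw [← range_ofCoords, LinearMap.finrank_range_of_inj ofCoords_injective,
    Module.finrank_fintype_fun_eq_card, ← Nat.card_eq_fintype_card, Set.powersetCard.card,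
    Nat.card_eq_fintype_card, Fintype.card_fin]
  rfl

end Coordinates

section Hodge

open Finset

lemma card_compl_quadruple {s : Finset (Fin 8)} (hs : #s = 4) : #sᶜ = 4 := by
  rw [card_compl, hs, Fintype.card_fin]

lemma prod_sign_eq_quadSign_mul_quadSign :
    ∀ i j, i < j → ∀ k, j < k → ∀ l, k < l → ∀ a b, a < b → ∀ c, b < c → ∀ d, c < d →
      ({a, b, c, d} : Finset (Fin 8)) = {i, j, k, l}ᶜ →
      (∏ r, ∏ s ∈ Ioi r, if ![i, j, k, l, a, b, c, d] r < ![i, j, k, l, a, b, c, d] s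
        then 1 else -1 : ℤ) = quadSign i j k l * quadSign a b c d := by
  decide +kernel

lemma bijective_octuple_iff {i j k l a b c d : Fin 8} (hs : #{i, j, k, l} = 4)
    (ht : #{a, b, c, d} = 4) :
    Function.Bijective ![i, j, k, l, a, b, c, d] ↔
      ({a, b, c, d} : Finset (Fin 8)) = {i, j, k, l}ᶜ := by
  have hsurj : Function.Surjective ![i, j, k, l, a, b, c, d] ↔
      ({i, j, k, l} : Finset (Fin 8)) ∪ {a, b, c, d} = univ := by
    rw [eq_univ_iff_forall]
    refine forall_congr' fun x ↦ ?_
    rw [mem_union]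
    simp [Fin.exists_fin_succ, eq_comm, or_assoc]
  rw [← Finite.surjective_iff_bijective, hsurj]
  refine ⟨fun h ↦ ?_, fun h ↦ by rw [h, union_compl]⟩
  have hsub : ({i, j, k, l} : Finset (Fin 8))ᶜ ⊆ {a, b, c, d} := fun x hx ↦
    (mem_union.1 (h ▸ mem_univ x)).resolve_left (mem_compl.1 hx)
  exact (eq_of_subset_of_card_le hsub (by rw [ht, card_compl_quadruple hs])).symm

lemma eps8_octuple {i j k l : Fin 8} (hij : i < j) (hjk : j < k) (hkl : k < l) :
    (fun a b c d ↦ eps8 ![i, j, k, l, a, b, c, d]) =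
      ofCoords fun s ↦ if s.1 = {i, j, k, l}ᶜ then (quadSign i j k l : ℝ) else 0 := by
  refine FourForm.ext (eps8_mem i j k l) (ofCoords_mem _) fun a b c d hab hbc hcd ↦ ?_
  have hs := card_quadruple_of_lt hij hjk hkl
  have ht := card_quadruple_of_lt hab hbc hcd
  rw [ofCoords_apply, extendCoords_coe _ ⟨{a, b, c, d}, ht⟩]
  split_ifs with hst
  · rw [eps8_of_bijective ((bijective_octuple_iff hs ht).2 hst),
      prod_sign_eq_quadSign_mul_quadSign i j hij k hjk l hkl a b hab c hbc d hcd hst]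
    push_cast
    ring
  · rw [eps8, dif_neg (mt (bijective_octuple_iff hs ht).1 hst), mul_zero]

/-- Complementation of sets of four indices. -/
def complEquiv : Set.powersetCard (Fin 8) 4 ≃ Set.powersetCard (Fin 8) 4 :=
  Set.powersetCard.compl rfl

lemma hodgeOp_comp_ofCoords :
    hodgeOp ∘ₗ ofCoords = ofCoords ∘ₗ LinearMap.funLeft ℝ ℝ complEquiv := by
  refine LinearMap.ext fun y ↦ FourForm.ext (hodgeOp_mem _) (ofCoords_mem _)
    fun i j k l hij hjk hkl ↦ ?_
  set s : Set.powersetCard (Fin 8) 4 := ⟨{i, j, k, l}, card_quadruple_of_lt hij hjk hkl⟩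
  have hcompl (t : Set.powersetCard (Fin 8) 4) : t.1 = {i, j, k, l}ᶜ ↔ t = complEquiv s :=
    ⟨fun h ↦ Subtype.ext h, fun h ↦ congr_arg Subtype.val h⟩
  calc hodgeOp (ofCoords y) i j k l
      = (1 / 24) * (24 * ∑ t : Set.powersetCard (Fin 8) 4,
          (if t.1 = {i, j, k, l}ᶜ then (quadSign i j k l : ℝ) else 0) * y t) := by
        rw [← sum_ofCoords_mul_ofCoords, ← eps8_octuple hij hjk hkl, hodgeOp_apply]
    _ = quadSign i j k l * y (complEquiv s) := by
        rw [one_div, inv_mul_cancel_left₀ (by norm_num)]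
        simp only [hcompl, ite_mul, zero_mul, sum_ite_eq', mem_univ, if_true]
    _ = ofCoords (LinearMap.funLeft ℝ ℝ complEquiv y) i j k l := by
        rw [ofCoords_apply, extendCoords_coe _ s, LinearMap.funLeft_apply]

end Hodge

section Omega

open Finset

lemma sum_powersetCard_filter_inter_eq {α M : Type*} [Fintype α] [DecidableEq α]
    [AddCommMonoid M] {s u : Finset α} (hu : u ⊆ s) (n : ℕ) (g : Finset α → M) :
    ∑ t ∈ powersetCard (#u + n) univ with t ∩ s = u, g t =
      ∑ t ∈ powersetCard n univ with Disjoint t s, g (u ∪ t) := by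
  have hdisj {t : Finset α} (ht : t ∈ (powersetCard n univ).filter (Disjoint · s)) : Disjoint u t :=
    ((mem_filter.1 ht).2.mono_right hu).symm
  refine sum_nbij' (fun t ↦ t \ u) (fun t ↦ u ∪ t) (fun t ht ↦ ?_) (fun t ht ↦ ?_)
    (fun t ht ↦ ?_) (fun t ht ↦ union_sdiff_cancel_left (hdisj ht)) fun t ht ↦ ?_
  · obtain ⟨hcard, rfl⟩ := mem_filter.1 ht
    have := card_sdiff_add_card_inter t s
    rw [mem_filter, mem_powersetCard_univ, sdiff_inter_self_left]
    refine ⟨?_, disjoint_sdiff_self_left⟩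
    rw [mem_powersetCard_univ] at hcard
    omega
  · obtain ⟨hcard, hts⟩ := mem_filter.1 ht
    rw [mem_filter, mem_powersetCard_univ, card_union_of_disjoint (hdisj ht),
      mem_powersetCard_univ.1 hcard, union_inter_distrib_right, disjoint_iff_inter_eq_empty.1 hts,
      union_empty, inter_eq_left.2 hu]
    exact ⟨rfl, rfl⟩
  · obtain ⟨-, rfl⟩ := mem_filter.1 ht
    exact union_sdiff_of_subset inter_subset_left
  · obtain ⟨-, rfl⟩ := mem_filter.1 ht
    rw [union_sdiff_of_subset inter_subset_left]

lemma syndrome_union {s t : Finset (Fin 8)} (hst : Disjoint s t) :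
    syndrome (s ∪ t) = syndrome s + syndrome t :=
  sum_union hst

lemma syndrome_compl (s : Finset (Fin 8)) : syndrome sᶜ = syndrome s := by
  have huniv : syndrome univ = 0 := by decide
  rw [← CharTwo.add_eq_zero, ← syndrome_union disjoint_compl_left, union_comm,
    union_compl, huniv]

lemma card_syndrome_fiber (c : ZMod 2 × ZMod 2 × ZMod 2) :
    #{s : Set.powersetCard (Fin 8) 4 | syndrome s = c} = if c = 0 then 14 else 8 := by
  rw [card_filter, sum_coe_powersetCard fun s ↦ if syndrome s = c then 1 else 0]
  revert c
  decide +kernel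

lemma eq_or_eq_compl_or_card_inter_eq_two {s t : Finset (Fin 8)} (hs : #s = 4) (ht : #t = 4)
    (hst : syndrome t = syndrome s) : t = s ∨ t = sᶜ ∨ #(t ∩ s) = 2 := by
  have hts := card_sdiff_add_card_inter t s
  have hst' := card_sdiff_add_card_inter s t
  rw [inter_comm] at hst'
  have h3 : #(t ∩ s) ≠ 3 := fun h ↦
    sum_ne_sum_of_card_sdiff_eq_one pointLabel.injective (by omega) (by omega) hst
  have h1 : #(t ∩ s) ≠ 1 := fun h ↦ by
    refine sum_ne_sum_of_card_sdiff_eq_one pointLabel.injective (s := t) (t := sᶜ) ?_ ?_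
      (hst.trans (syndrome_compl s).symm)
    · rwa [sdiff_compl]
    · have hsc := card_sdiff_add_card_inter sᶜ t
      rw [card_compl_quadruple hs, inter_comm, ← sdiff_eq_inter_compl] at hsc
      omega
  have hcases : #(t ∩ s) = 4 ∨ #(t ∩ s) = 0 ∨ #(t ∩ s) = 2 := by omega
  refine hcases.imp (fun h ↦ ?_) (Or.imp_left fun h ↦ ?_)
  · have hsub : t ⊆ s := sdiff_eq_empty_iff_subset.1 (card_eq_zero.1 (by omega))
    exact eq_of_subset_of_card_le hsub (by omega)
  · have hsub : t ⊆ sᶜ :=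
      subset_compl_iff_disjoint_right.2 (disjoint_iff_inter_eq_empty.2 (card_eq_zero.1 h))
    exact eq_of_subset_of_card_le hsub (by rw [card_compl_quadruple hs, ht])

lemma quadSign_of_even : ∀ i j k l, #{i, j, k, l} = 4 →
    quadSign i k l j = quadSign i j k l ∧ quadSign i l j k = quadSign i j k l ∧
      quadSign j k i l = quadSign i j k l ∧ quadSign j l k i = quadSign i j k l ∧
      quadSign k l i j = quadSign i j k l := by
  decide +kernel

lemma phi_eq_ofCoords : Phi = ofCoords fun s ↦ if syndrome s = 0 then 1 else 0 := by
  refine FourForm.ext phi_mem (ofCoords_mem _) fun i j k l hij hjk hkl ↦ ?_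
  rw [ofCoords_apply, extendCoords_coe _ ⟨{i, j, k, l}, card_quadruple_of_lt hij hjk hkl⟩]
  simp (discharger := first | assumption | decide) only [Phi, wedge4_of_lt]
  norm_cast
  revert i j k l
  decide +kernel

lemma quadSign_eq_neg_of_syndrome_eq_zero : ∀ p q c d, #{p, q, c, d} = 4 →
    syndrome {p, q, c, d} = 0 → quadSign p q c d = -(spinorSign p q * spinorSign c d) := by
  decide +kernel

lemma pointLabel_add_eq_of_syndrome_eq_zero : ∀ p q c d, #{p, q, c, d} = 4 →
    syndrome {p, q, c, d} = 0 → pointLabel p + pointLabel q = pointLabel c + pointLabel d := by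
  decide +kernel

lemma quadSign_mul_phi (a b p q c d : Fin 8) :
    quadSign a b p q * Phi p q c d =
      if #{p, q, c, d} = 4 ∧ syndrome {p, q, c, d} = 0 then -(quadSign a b c d : ℝ) else 0 := by
  rw [phi_eq_ofCoords, ofCoords_apply]
  by_cases hcard : #{p, q, c, d} = 4
  · rw [extendCoords_coe _ ⟨{p, q, c, d}, hcard⟩]
    by_cases hsyn : syndrome {p, q, c, d} = 0
    · have hpqcd : pointLabel p + pointLabel q = pointLabel c + pointLabel d :=
        pointLabel_add_eq_of_syndrome_eq_zero p q c d hcard hsyn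
      have hfourth : fourthPoint b p q = fourthPoint b c d := by
        rw [fourthPoint, fourthPoint, add_assoc, hpqcd, ← add_assoc]
      have hsq : (spinorSign p q : ℝ) ^ 2 = 1 := by exact_mod_cast spinorSign_sq p q
      rw [if_pos hsyn, if_pos ⟨hcard, hsyn⟩, quadSign_eq_neg_of_syndrome_eq_zero p q c d hcard hsyn,
        quadSign, quadSign, hfourth]
      push_cast
      linear_combination (-spinorSign a (fourthPoint b c d) * spinorSign (fourthPoint b c d) b *
        spinorSign c d : ℝ) * hsq
    · rw [if_neg hsyn, if_neg fun h ↦ hsyn h.2, mul_zero, mul_zero]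
  · rw [extendCoords_of_card_ne _ hcard, if_neg fun h ↦ hcard h.1, mul_zero, mul_zero]

lemma pair_union_pair {α : Type*} [DecidableEq α] (a b c d : α) :
    ({a, b} ∪ {c, d} : Finset α) = {a, b, c, d} := by
  rw [insert_union, singleton_union]

lemma card_union_eq_four_iff {α : Type*} [DecidableEq α] {s t : Finset α} (hs : #s ≤ 2)
    (ht : #t ≤ 2) : #(s ∪ t) = 4 ↔ #s = 2 ∧ #t = 2 ∧ Disjoint s t := by
  rw [← card_union_eq_card_add_card]
  have := card_union_le s t
  omega

lemma ofCoords_mul_phi (y : Set.powersetCard (Fin 8) 4 → ℝ) {a b c d : Fin 8}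
    (hcard : #{a, b, c, d} = 4) (p q : Fin 8) :
    ofCoords y a b p q * Phi p q c d = -(quadSign a b c d) *
      if #{p, q} = 2 ∧ Disjoint ({p, q} : Finset (Fin 8)) {a, b, c, d} then
        if syndrome ({a, b} ∪ {p, q}) = syndrome {a, b, c, d} then
          extendCoords y ({a, b} ∪ {p, q}) else 0
      else 0 := by
  rw [← pair_union_pair] at hcard
  obtain ⟨-, hcd, hdisj⟩ := (card_union_eq_four_iff card_le_two card_le_two).1 hcard
  have ht : #{p, q} ≤ 2 := card_le_two
  rw [ofCoords_apply, mul_right_comm, quadSign_mul_phi, ← pair_union_pair a b c d,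
    ← pair_union_pair a b p q, ← pair_union_pair p q c d]
  generalize ({p, q} : Finset (Fin 8)) = t at ht ⊢
  by_cases htd : #t = 2 ∧ Disjoint t ({a, b} ∪ {c, d})
  · obtain ⟨htab, htcd⟩ := disjoint_union_right.1 htd.2
    have hiff : #(t ∪ {c, d}) = 4 ∧ syndrome (t ∪ {c, d}) = 0 ↔
        syndrome ({a, b} ∪ t) = syndrome ({a, b} ∪ {c, d}) := by
      rw [and_iff_right ((card_union_eq_four_iff ht card_le_two).2 ⟨htd.1, hcd, htcd⟩),
        syndrome_union htcd, syndrome_union htab.symm, syndrome_union hdisj,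
        CharTwo.add_eq_zero, add_right_inj]
    simp only [if_pos htd, hiff, ite_mul, zero_mul, mul_ite, mul_zero]
  · rw [if_neg htd, mul_zero]
    by_cases htab : #({a, b} ∪ t) = 4
    · obtain ⟨-, ht2, hdab⟩ := (card_union_eq_four_iff card_le_two ht).1 htab
      have htcd : #(t ∪ {c, d}) ≠ 4 := fun h ↦ htd ⟨ht2, disjoint_union_right.2 ⟨hdab.symm,
        ((card_union_eq_four_iff ht card_le_two).1 h).2.2⟩⟩
      rw [if_neg fun h ↦ htcd h.1, zero_mul]
    · rw [extendCoords_of_card_ne y htab, mul_zero]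

lemma doubleContraction_ofCoords_phi (y : Set.powersetCard (Fin 8) 4 → ℝ) {a b c d : Fin 8}
    (hcard : #{a, b, c, d} = 4) :
    doubleContraction (ofCoords y) Phi a b c d = -2 * quadSign a b c d *
      ∑ t ∈ univ.powersetCard 4 with t ∩ {a, b, c, d} = {a, b},
        if syndrome t = syndrome {a, b, c, d} then extendCoords y t else 0 := by
  set s : Finset (Fin 8) := {a, b, c, d} with hs
  set g : Finset (Fin 8) → ℝ := fun t ↦ if syndrome t = syndrome s then extendCoords y t else 0
  have hab : #{a, b} = 2 := by
    rw [hs, ← pair_union_pair] at hcard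
    exact ((card_union_eq_four_iff card_le_two card_le_two).1 hcard).1
  calc doubleContraction (ofCoords y) Phi a b c d
      = -(quadSign a b c d) * ∑ p, ∑ q,
          if #{p, q} = 2 ∧ Disjoint {p, q} s then g ({a, b} ∪ {p, q}) else 0 := by
        simp only [doubleContraction, ofCoords_mul_phi y hcard, mul_sum, g, hs]
    _ = -(quadSign a b c d) *
          (2 * ∑ t ∈ univ.powersetCard 2 with Disjoint t s, g ({a, b} ∪ t)) := by
        rw [sum_sum_apply_pair (h := fun t ↦ if #t = 2 ∧ Disjoint t s then g ({a, b} ∪ t) else 0)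
          fun t ht ↦ if_neg fun h ↦ ht h.1, nsmul_eq_mul, Nat.cast_ofNat, sum_filter]
        congr 2
        refine sum_congr rfl fun t ht ↦ ?_
        simp only [mem_powersetCard_univ.1 ht, true_and]
    _ = -2 * quadSign a b c d * ∑ t ∈ univ.powersetCard 4 with t ∩ s = {a, b}, g t := by
        rw [← sum_powersetCard_filter_inter_eq (by simp [hs, insert_subset_iff]), hab]
        ring

lemma sum_powersetCard_sum_filter_inter {α M : Type*} [DecidableEq α] [AddCommMonoid M]
    (u : Finset (Finset α)) (s : Finset α) (n : ℕ) (g : Finset α → M) :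
    ∑ r ∈ powersetCard n s, ∑ t ∈ u with t ∩ s = r, g t = ∑ t ∈ u with #(t ∩ s) = n, g t := by
  rw [← sum_fiberwise_of_maps_to (g := fun t ↦ t ∩ s) (t := powersetCard n s)
    fun t ht ↦ mem_powersetCard.2 ⟨inter_subset_right, (mem_filter.1 ht).2⟩]
  refine sum_congr rfl fun r hr ↦ ?_
  rw [filter_filter]
  refine sum_congr (filter_congr fun t _ ↦ ?_) fun _ _ ↦ rfl
  rw [iff_and_self]
  rintro rfl
  exact (mem_powersetCard.1 hr).2

lemma sum_filter_card_inter_eq_two {M : Type*} [AddCommGroup M] {s : Finset (Fin 8)}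
    (hs : #s = 4) (g : Finset (Fin 8) → M) :
    ∑ t ∈ univ.powersetCard 4 with #(t ∩ s) = 2, (if syndrome t = syndrome s then g t else 0) =
      ∑ t ∈ univ.powersetCard 4 with syndrome t = syndrome s, g t - g s - g sᶜ := by
  rw [← sum_filter, filter_filter]
  have hfilter : (powersetCard 4 univ).filter (syndrome · = syndrome s) =
      insert s (insert sᶜ ((powersetCard 4 univ).filter fun t ↦
        #(t ∩ s) = 2 ∧ syndrome t = syndrome s)) := by
    ext t
    simp only [mem_filter, mem_insert, mem_powersetCard_univ]
    refine ⟨fun ⟨ht, hts⟩ ↦ ?_, ?_⟩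
    · have := eq_or_eq_compl_or_card_inter_eq_two hs ht hts
      tauto
    · rintro (rfl | rfl | ⟨ht, -, hts⟩)
      · exact ⟨hs, rfl⟩
      · exact ⟨card_compl_quadruple hs, syndrome_compl s⟩
      · exact ⟨ht, hts⟩
  have hne : s ≠ sᶜ := ne_compl_self
  rw [hfilter, sum_insert (by simp [hne, hs]), sum_insert (by simp [inter_comm sᶜ s])]
  abel

lemma omegaOp_ofCoords_apply (y : Set.powersetCard (Fin 8) 4 → ℝ) {i j k l : Fin 8} (hij : i < j)
    (hjk : j < k) (hkl : k < l) :
    OmegaOp (ofCoords y) i j k l = -2 * quadSign i j k l *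
      ∑ t ∈ univ.powersetCard 4 with #(t ∩ {i, j, k, l}) = 2,
        if syndrome t = syndrome {i, j, k, l} then extendCoords y t else 0 := by
  have hcard := card_quadruple_of_lt hij hjk hkl
  have hsign := quadSign_of_even i j k l hcard
  set s : Finset (Fin 8) := {i, j, k, l} with hs
  have hterm {a b c d : Fin 8} (habcd : {a, b, c, d} = s)
      (hq : quadSign a b c d = quadSign i j k l) :
      doubleContraction (ofCoords y) Phi a b c d = -2 * quadSign i j k l *
        ∑ t ∈ univ.powersetCard 4 with t ∩ s = {a, b},
          if syndrome t = syndrome s then extendCoords y t else 0 := by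
    rw [doubleContraction_ofCoords_phi y (by rw [habcd, hcard]), habcd, hq]
  rw [← sum_powersetCard_sum_filter_inter, omegaOp_apply, hterm hs.symm rfl,
    hterm (by grind) hsign.1, hterm (by grind) hsign.2.1, hterm (by grind) hsign.2.2.1,
    hterm (by grind) hsign.2.2.2.1, hterm (by grind) hsign.2.2.2.2, hs,
    sum_powersetCard_two hij.ne (hij.trans hjk).ne (hij.trans (hjk.trans hkl)).ne hjk.ne
      (hjk.trans hkl).ne hkl.ne]
  ring

end Omega

section Decomposition

open Finset

lemma iSup_fin_four {α : Type*} [CompleteLattice α] (f : Fin 4 → α) :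
    ⨆ a, f a = f 0 ⊔ f 1 ⊔ f 2 ⊔ f 3 := by
  rw [← sup_univ_eq_iSup]
  simp [Fin.univ_succ, sup_assoc]

/-- The projections of the coordinate space of 4-forms onto the coordinates of `Λ⁴₁`, `Λ⁴₇`,
`Λ⁴₂₇` and `Λ⁴₃₅`, in this order: the averages over the set of syndrome `0` and over the sets of
each nonzero syndrome, the remaining complementation-invariant vectors, and the vectors changing
sign under complementation. -/
def spectralProjection : Fin 4 → Module.End ℝ (Set.powersetCard (Fin 8) 4 → ℝ) :=
  let c := LinearMap.funLeft ℝ ℝ complEquiv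
  let p := fiberAverage fun s : Set.powersetCard (Fin 8) 4 ↦ syndrome s
  ![p {0}, p {0}ᶜ, (2⁻¹ : ℝ) • (1 + c) - p {0} - p {0}ᶜ, (2⁻¹ : ℝ) • (1 - c)]

lemma syndrome_complEquiv (s : Set.powersetCard (Fin 8) 4) :
    syndrome (complEquiv s) = syndrome s :=
  syndrome_compl s

lemma funLeft_complEquiv_mul_self :
    LinearMap.funLeft ℝ ℝ complEquiv * LinearMap.funLeft ℝ ℝ complEquiv = 1 := by
  refine LinearMap.ext fun y ↦ funext fun s ↦ congr_arg y (Subtype.ext ?_)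
  exact compl_compl s.1

lemma completeOrthogonalIdempotents_spectralProjection :
    CompleteOrthogonalIdempotents spectralProjection :=
  completeOrthogonalIdempotents_of_involution funLeft_complEquiv_mul_self
    (isIdempotentElem_fiberAverage _ _) (isIdempotentElem_fiberAverage _ _)
    (fiberAverage_mul_eq_zero _ disjoint_compl_right)
    (fiberAverage_mul_eq_zero _ disjoint_compl_left)
    (funLeft_mul_fiberAverage syndrome_complEquiv _)
    (fiberAverage_mul_funLeft syndrome_complEquiv _)
    (funLeft_mul_fiberAverage syndrome_complEquiv _)
    (fiberAverage_mul_funLeft syndrome_complEquiv _)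

/-- The summands `Λ⁴₁`, `Λ⁴₇`, `Λ⁴₂₇` and `Λ⁴₃₅`, in this order. -/
def spin7Summand (a : Fin 4) : Submodule ℝ FourTensor :=
  (LinearMap.range (spectralProjection a)).map ofCoords

lemma finrank_spin7Summand (a : Fin 4) :
    Module.finrank ℝ (spin7Summand a) = ![1, 7, 27, 35] a := by
  have hsyn (c) : ∃ s : Set.powersetCard (Fin 8) 4, syndrome s = c := by
    have hfiber := card_syndrome_fiber c
    have hpos : 0 < #{s : Set.powersetCard (Fin 8) 4 | syndrome s = c} := by
      split_ifs at hfiber <;> omega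
    obtain ⟨s, hs⟩ := card_pos.1 hpos
    exact ⟨s, (mem_filter.1 hs).2⟩
  have hcompl : LinearMap.trace ℝ _ (LinearMap.funLeft ℝ ℝ complEquiv) = 0 :=
    trace_funLeft_eq_zero fun s hs ↦ compl_ne_self (a := s.1) (congr_arg Subtype.val hs)
  have hone : LinearMap.trace ℝ _ (1 : Module.End ℝ (Set.powersetCard (Fin 8) 4 → ℝ)) = 70 := by
    rw [LinearMap.trace_one, ← LinearMap.finrank_range_of_inj ofCoords_injective, range_ofCoords,
      finrank_fourForm, Nat.cast_ofNat]
  rw [spin7Summand, ← (Submodule.equivMapOfInjective ofCoords ofCoords_injective _).finrank_eq]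
  refine finrank_range_of_trace_eq (completeOrthogonalIdempotents_spectralProjection.idem a) ?_
  have h1 := trace_fiberAverage (K := ℝ) (s := {0}) fun c _ ↦ hsyn c
  have h7 := trace_fiberAverage (K := ℝ) (s := {0}ᶜ) fun c _ ↦ hsyn c
  fin_cases a <;> simp [spectralProjection, hcompl, hone, h1, h7, card_compl] <;> norm_num

lemma fourForm_inf_eigenspace {A : Module.End ℝ FourTensor} {r : Fin 4 → ℝ}
    (hA : A ∘ₗ ofCoords = ofCoords ∘ₗ ∑ a, r a • spectralProjection a) (μ : ℝ) :
    FourForm ⊓ A.eigenspace μ = ⨆ a, ⨆ _ : r a = μ, spin7Summand a := by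
  rw [← range_ofCoords, range_inf_eigenspace ofCoords_injective hA,
    eigenspace_sum_smul completeOrthogonalIdempotents_spectralProjection]
  simp only [Submodule.map_iSup, spin7Summand]

lemma iSup_spin7Summand : ⨆ a, spin7Summand a = FourForm := by
  simp only [spin7Summand, ← Submodule.map_iSup,
    iSup_range_eq_top completeOrthogonalIdempotents_spectralProjection, Submodule.map_top,
    range_ofCoords]

/-- The eigenvalues of `OmegaOp` on the summands `spin7Summand`. -/
def omegaEigenvalue : Fin 4 → ℝ :=
  ![-24, -12, 4, 0]

lemma sum_syndrome_eq_fiberAverage (y : Set.powersetCard (Fin 8) 4 → ℝ)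
    (s : Set.powersetCard (Fin 8) 4) :
    ∑ t ∈ univ.powersetCard 4 with syndrome t = syndrome s, extendCoords y t =
      14 * fiberAverage (fun t : Set.powersetCard (Fin 8) 4 ↦ syndrome t) {0} y s +
        8 * fiberAverage (fun t : Set.powersetCard (Fin 8) 4 ↦ syndrome t) {0}ᶜ y s := by
  rw [sum_filter, ← sum_coe_powersetCard, ← sum_filter]
  simp only [extendCoords_coe, fiberAverage_apply, card_syndrome_fiber, mem_compl, mem_singleton]
  by_cases hs : syndrome s = 0
  · rw [if_pos hs, if_pos hs, if_neg (not_not.2 hs), mul_zero, add_zero]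
    exact (mul_inv_cancel_left₀ (by norm_num) _).symm
  · rw [if_neg hs, if_neg hs, if_pos hs, mul_zero, zero_add]
    exact (mul_inv_cancel_left₀ (by norm_num) _).symm

lemma sum_omegaEigenvalue_smul_spectralProjection_apply (y : Set.powersetCard (Fin 8) 4 → ℝ)
    (s : Set.powersetCard (Fin 8) 4) :
    (∑ a, omegaEigenvalue a • spectralProjection a) y s = -2 *
      (∑ t ∈ univ.powersetCard 4 with syndrome t = syndrome s, extendCoords y t
        - y s - y (complEquiv s)) := by
  rw [sum_syndrome_eq_fiberAverage, Fin.sum_univ_four]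
  simp only [omegaEigenvalue, spectralProjection, Matrix.cons_val, LinearMap.add_apply,
    LinearMap.sub_apply, LinearMap.smul_apply, Module.End.one_apply, Pi.add_apply, Pi.sub_apply,
    Pi.smul_apply, LinearMap.funLeft_apply, smul_eq_mul]
  ring

lemma omegaOp_comp_ofCoords :
    OmegaOp ∘ₗ ofCoords = ofCoords ∘ₗ ∑ a, omegaEigenvalue a • spectralProjection a := by
  refine LinearMap.ext fun y ↦ FourForm.ext (omegaOp_mem (ofCoords_mem _)) (ofCoords_mem _)
    fun i j k l hij hjk hkl ↦ ?_
  have hcard := card_quadruple_of_lt hij hjk hkl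
  set s : Set.powersetCard (Fin 8) 4 := ⟨{i, j, k, l}, hcard⟩
  have hs : ({i, j, k, l} : Finset (Fin 8)) = s := rfl
  have hcompl : extendCoords y sᶜ = y (complEquiv s) := extendCoords_coe y (complEquiv s)
  rw [LinearMap.comp_apply, LinearMap.comp_apply, omegaOp_ofCoords_apply y hij hjk hkl,
    sum_filter_card_inter_eq_two hcard, ofCoords_apply, hs, extendCoords_coe, extendCoords_coe,
    hcompl, sum_omegaEigenvalue_smul_spectralProjection_apply]
  ring

lemma hodgeOp_comp_ofCoords_eq_sum :
    hodgeOp ∘ₗ ofCoords =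
      ofCoords ∘ₗ ∑ a : Fin 4, (if a = 3 then -1 else 1 : ℝ) • spectralProjection a := by
  rw [hodgeOp_comp_ofCoords]
  congr 1
  simp only [Fin.sum_univ_four, spectralProjection, Fin.reduceEq, if_true, if_false,
    Matrix.cons_val]
  module

lemma fourForm_inf_eigenspace_omegaOp (a : Fin 4) :
    FourForm ⊓ Module.End.eigenspace OmegaOp (omegaEigenvalue a) = spin7Summand a := by
  have hinj : Function.Injective omegaEigenvalue := by
    intro a b
    fin_cases a <;> fin_cases b <;> norm_num [omegaEigenvalue]
  simp only [fourForm_inf_eigenspace omegaOp_comp_ofCoords, hinj.eq_iff, iSup_iSup_eq_left]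

lemma selfDual4_eq_sup : SelfDual4 = spin7Summand 0 ⊔ spin7Summand 1 ⊔ spin7Summand 2 := by
  rw [SelfDual4, fourForm_inf_eigenspace hodgeOp_comp_ofCoords_eq_sum, iSup_fin_four]
  norm_num [Fin.ext_iff]

lemma antiSelfDual4_eq_spin7Summand : AntiSelfDual4 = spin7Summand 3 := by
  rw [AntiSelfDual4, fourForm_inf_eigenspace hodgeOp_comp_ofCoords_eq_sum, iSup_fin_four]
  norm_num [Fin.ext_iff]

lemma omegaOp_apply_of_mem_spin7Summand {a : Fin 4} {σ : FourTensor} (hσ : σ ∈ spin7Summand a) :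
    OmegaOp σ = omegaEigenvalue a • σ := by
  rw [← fourForm_inf_eigenspace_omegaOp] at hσ
  exact Module.End.mem_eigenspace_iff.1 hσ.2

lemma omegaOp_polynomial_eq_zero {σ : FourTensor} (hσ : σ ∈ FourForm) :
    ((OmegaOp + (24 : ℝ) • LinearMap.id) ∘ₗ (OmegaOp + (12 : ℝ) • LinearMap.id)
      ∘ₗ (OmegaOp - (4 : ℝ) • LinearMap.id) ∘ₗ OmegaOp) σ = 0 := by
  rw [← iSup_spin7Summand] at hσ
  induction hσ using Submodule.iSup_induction' with
  | mem a σ hσ =>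
    have hΩ := omegaOp_apply_of_mem_spin7Summand hσ
    fin_cases a <;> simp [hΩ, omegaEigenvalue] <;> module
  | zero => exact map_zero _
  | add σ τ _ _ hσ hτ => rw [map_add, hσ, hτ, add_zero]

end Decomposition

/-- `Ω_Φ` is diagonalizable on the 70-dimensional space of 4-forms with eigenvalues
`-24, -12, 4, 0`, eigenspaces of dimensions `1, 7, 27, 35`; the self-dual 4-forms are
`Λ⁴₁ ⊕ Λ⁴₇ ⊕ Λ⁴₂₇` and the anti-self-dual 4-forms are `Λ⁴₃₅`; in particular
`(Ω_Φ + 24)(Ω_Φ + 12)(Ω_Φ - 4)Ω_Φ = 0` on 4-forms. -/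
theorem spin7_four_form_decomposition :
    Module.finrank ℝ ↥FourForm = 70 ∧
    Module.finrank ℝ ↥Lambda4_1 = 1 ∧
    Module.finrank ℝ ↥Lambda4_7 = 7 ∧
    Module.finrank ℝ ↥Lambda4_27 = 27 ∧
    Module.finrank ℝ ↥Lambda4_35 = 35 ∧
    Lambda4_1 ⊔ Lambda4_7 ⊔ Lambda4_27 ⊔ Lambda4_35 = FourForm ∧
    SelfDual4 = Lambda4_1 ⊔ Lambda4_7 ⊔ Lambda4_27 ∧
    AntiSelfDual4 = Lambda4_35 ∧
    ∀ σ, σ ∈ FourForm →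
      ((OmegaOp + (24 : ℝ) • LinearMap.id) ∘ₗ (OmegaOp + (12 : ℝ) • LinearMap.id)
        ∘ₗ (OmegaOp - (4 : ℝ) • LinearMap.id) ∘ₗ OmegaOp) σ = 0 := by
  have h1 : Lambda4_1 = spin7Summand 0 := fourForm_inf_eigenspace_omegaOp 0
  have h7 : Lambda4_7 = spin7Summand 1 := fourForm_inf_eigenspace_omegaOp 1
  have h27 : Lambda4_27 = spin7Summand 2 := fourForm_inf_eigenspace_omegaOp 2
  have h35 : Lambda4_35 = spin7Summand 3 := fourForm_inf_eigenspace_omegaOp 3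
  rw [h1, h7, h27, h35, ← iSup_fin_four, iSup_spin7Summand]
  exact ⟨finrank_fourForm, finrank_spin7Summand 0, finrank_spin7Summand 1, finrank_spin7Summand 2,
    finrank_spin7Summand 3, rfl, selfDual4_eq_sup, antiSelfDual4_eq_spin7Summand,
    fun _ ↦ omegaOp_polynomial_eq_zero⟩
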